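/- Let G be a graph with a rooted tree decomposition T of adhesion k where no two distinct tree nodes with equal parent separators fail to be siblings. If for every tree node t the augmented part P̃_t admits a complete contraction sequence respecting its parent separator S_t of width at most w, then tww(G) ≤ w. -/

import Mathlib

/-!
Work bottom-up in the tree. Write `U_t` for the vertices of `G_t - S_t`. The invariant proved by
induction (`node_chain`) is that the partition of `U_t` into singletons can be merged, step by
step, into the partition of `U_t` by neighborhoods in `S_t`, where every intermediate partition is
`Good`: its quotient has red degree at most `w`, and each part is homogeneous to every vertex of
`S_t`.

For the inductive step at `t`, the sequences of the children `c` are run one after the other. All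
neighbors of `U_c` outside `U_c` lie in `S_c`, which is contained in the bag of `t`, and parts
inside `U_c` are homogeneous to `S_c`; so no red edge leaves `U_c`, and partitions of different
children together with the singletons of the bag combine without new red edges (`Good.union`).
Once all children are finished, the quotient is a trigraph on the vertices of the augmented part
outside `S_t`, whose red edges are among those of the augmented part. A partition of the augmented
part is therefore pulled back to `U_t` (`pullPart`), which turns its given complete contraction
sequence into one for `U_t` with no larger red degrees; completeness means that its last partition
is the one by neighborhoods in `S_t` (`pullPart_complete`).

At the root, `S_t` is empty, so the final partition has the single part `V`. The infimum in `twwR`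
is attained because a complete sequence respecting `S_t` always exists: two parts with the same
neighborhood in `S_t` can be merged as long as there are any (`exists_complete_chain`).
-/

open scoped Classical

noncomputable section

/-- A trigraph: a finite graph whose edges are colored black or red. -/
structure Trigraph (V : Type*) where
  black : V → V → Prop
  red : V → V → Prop
  black_symm : ∀ u v, black u v → black v u
  red_symm : ∀ u v, red u v → red v u
  black_irrefl : ∀ v, ¬ black v v
  red_irrefl : ∀ v, ¬ red v v
  not_black_and_red : ∀ u v, ¬ (black u v ∧ red u v)

variable {V : Type*}

/-- A simple graph seen as a trigraph with no red edges. -/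
def SimpleGraph.toTrigraph (G : SimpleGraph V) : Trigraph V where
  black := G.Adj
  red _ _ := False
  black_symm _ _ h := h.symm
  red_symm _ _ h := h.elim
  black_irrefl _ h := G.irrefl h
  red_irrefl _ h := h
  not_black_and_red _ _ h := h.2

/-- Induced subtrigraph on a set of vertices. -/
def Trigraph.induce (G : Trigraph V) (s : Set V) : Trigraph s where
  black u v := G.black u.1 v.1
  red u v := G.red u.1 v.1
  black_symm _ _ h := G.black_symm _ _ h
  red_symm _ _ h := G.red_symm _ _ h
  black_irrefl v := G.black_irrefl v.1
  red_irrefl v := G.red_irrefl v.1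
  not_black_and_red u v := G.not_black_and_red u.1 v.1

/-- The discrete partition of the vertex set into singletons. -/
def discretePart (V : Type*) [Fintype V] : Finset (Finset V) :=
  Finset.univ.image fun v => ({v} : Finset V)

/-- `Q` is obtained from the partition `P` by merging (contracting) two distinct parts. -/
def MergeStep (P Q : Finset (Finset V)) : Prop :=
  ∃ A ∈ P, ∃ B ∈ P, A ≠ B ∧ Q = insert (A ∪ B) ((P.erase A).erase B)

/-- Two parts are joined by a red edge in the quotient trigraph if there is a red edge
between them, or if they are not homogeneously connected by black edges. -/
def Trigraph.redAdj (G : Trigraph V) (A B : Finset V) : Prop :=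
  A ≠ B ∧ ((∃ a ∈ A, ∃ b ∈ B, G.red a b) ∨
    ((∃ a ∈ A, ∃ b ∈ B, G.black a b) ∧ ¬ ∀ a ∈ A, ∀ b ∈ B, G.black a b))

/-- The red degree of a part `A` in the quotient of `G` by the partition `P`. -/
def Trigraph.redDeg (G : Trigraph V) (P : Finset (Finset V)) (A : Finset V) : ℕ :=
  (P.filter fun B => G.redAdj A B).card

/-- The maximum red degree of the quotient of `G` by the partition `P`. -/
def Trigraph.maxRedDeg (G : Trigraph V) (P : Finset (Finset V)) : ℕ :=
  P.sup fun A => G.redDeg P A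

/-- A contraction sequence of partitions: starts with the discrete partition, and each
step merges two parts. -/
def IsCSeq (V : Type*) [Fintype V] (len : ℕ) (f : ℕ → Finset (Finset V)) : Prop :=
  f 0 = discretePart V ∧ ∀ i < len, MergeStep (f i) (f (i + 1))

/-- The twin-width of a trigraph: the minimum over all complete contraction sequences of
the maximum red degree attained. -/
def Trigraph.tww [Fintype V] (G : Trigraph V) : ℕ :=
  sInf { w | ∃ f : ℕ → Finset (Finset V),
    IsCSeq V (Fintype.card V - 1) f ∧
    f (Fintype.card V - 1) = {Finset.univ} ∧
    ∀ i ≤ Fintype.card V - 1, G.maxRedDeg (f i) ≤ w }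

/-- The final partition of a `U`-contraction sequence: `U` is one part,
all other vertices are singletons. -/
def finalOn (V : Type*) [Fintype V] (U : Finset V) : Finset (Finset V) :=
  insert U ((Finset.univ \ U).image fun v => ({v} : Finset V))

/-- `tww_U(G)`: the minimum width of a partial contraction sequence involving only
vertices of `U` and contracting `U` into a single part. -/
def Trigraph.twwOn [Fintype V] (G : Trigraph V) (U : Finset V) : ℕ :=
  sInf { w | ∃ f : ℕ → Finset (Finset V),
    IsCSeq V (U.card - 1) f ∧ f (U.card - 1) = finalOn V U ∧
    ∀ i ≤ U.card - 1, G.maxRedDeg (f i) ≤ w }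

/-- A partition respects `A` if all vertices of `A` are singleton parts of red degree `0`. -/
def Trigraph.Respects (G : Trigraph V) (A : Finset V) (P : Finset (Finset V)) : Prop :=
  (∀ a ∈ A, ({a} : Finset V) ∈ P) ∧ ∀ a ∈ A, G.redDeg P {a} = 0

/-- A partition respecting `A` is complete if no two parts outside `A` have the same
(black) neighborhood in `A`. -/
def Trigraph.CompleteFor (G : Trigraph V) (A : Finset V) (P : Finset (Finset V)) : Prop :=
  ∀ B ∈ P, ∀ C ∈ P, B ≠ C → Disjoint B A → Disjoint C A →
    ¬ ∀ a ∈ A, ((∃ b ∈ B, G.black b a) ↔ ∃ c ∈ C, G.black c a)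

/-- `tww(G, A)`: the minimum width of a complete contraction sequence respecting `A`. -/
def Trigraph.twwR [Fintype V] (G : Trigraph V) (A : Finset V) : ℕ :=
  sInf { w | ∃ (len : ℕ) (f : ℕ → Finset (Finset V)), IsCSeq V len f ∧
    (∀ i ≤ len, G.Respects A (f i)) ∧ G.CompleteFor A (f len) ∧
    ∀ i ≤ len, G.maxRedDeg (f i) ≤ w }

/-- A rooted tree decomposition of `G`, encoded via a parent function on the index
type `ι`: bags cover all vertices and edges, and for every vertex the set of bags
containing it forms a subtree. -/
structure RootedTreeDecomp {V : Type*} (G : SimpleGraph V) (ι : Type*) where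
  par : ι → ι
  root : ι
  par_root : par root = root
  reaches : ∀ t, ∃ n, par^[n] t = root
  B : ι → Finset V
  cover : ∀ v, ∃ t, v ∈ B t
  edge : ∀ u v, G.Adj u v → ∃ t, u ∈ B t ∧ v ∈ B t
  subtree : ∀ v s, v ∈ B s → v ∈ B (par s) ∨ ∀ t, v ∈ B t → ∃ n, par^[n] t = s

variable {ι : Type*} {G : SimpleGraph V}

/-- The parent separator of node `t` (empty for the root). -/
def sep (D : RootedTreeDecomp G ι) (t : ι) : Finset V :=
  if t = D.root then ∅ else D.B t ∩ D.B (D.par t)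

/-- `t` is a descendant of `c` (including `c` itself). -/
def descOf (D : RootedTreeDecomp G ι) (c t : ι) : Prop :=
  ∃ n, D.par^[n] t = c

/-- The vertices of `G_c`: the union of the bags in the subtree rooted at `c`. -/
def subVerts [Fintype V] (D : RootedTreeDecomp G ι) (c : ι) : Finset V :=
  Finset.univ.filter fun v => ∃ t, descOf D c t ∧ v ∈ D.B t

/-- The set of neighborhoods in `S_c` of vertices of `G_c − S_c`. -/
def nbhds [Fintype V] (D : RootedTreeDecomp G ι) (c : ι) : Finset (Finset V) :=
  (subVerts D c \ sep D c).image fun v => (sep D c).filter fun s => G.Adj v s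

/-- The children of `t` in the rooted tree. -/
abbrev Child (D : RootedTreeDecomp G ι) (t : ι) := {c : ι // D.par c = t ∧ c ≠ t}

/-- The vertex type of the augmented part `P̃_t`: the bag `B t` plus one fresh vertex
for each child `c` and each neighborhood `M ∈ N_c`. -/
abbrev PtilV [Fintype V] (D : RootedTreeDecomp G ι) (t : ι) :=
  {v // v ∈ D.B t} ⊕ Σ c : Child D t, {M : Finset V // M ∈ nbhds D c.1}

/-- The augmented part `P̃_t`: the part `G[B t]` together with, for each child `c` and
each `M ∈ N_c`, a fresh vertex joined by black edges to the vertices of `M`, the fresh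
vertices of each child forming a red clique. -/
def Ptil [Fintype V] (D : RootedTreeDecomp G ι) (t : ι) : Trigraph (PtilV D t) where
  black x y :=
    match x, y with
    | Sum.inl u, Sum.inl w => G.Adj u.1 w.1
    | Sum.inl u, Sum.inr m => u.1 ∈ m.2.1
    | Sum.inr m, Sum.inl u => u.1 ∈ m.2.1
    | Sum.inr _, Sum.inr _ => False
  red x y :=
    match x, y with
    | Sum.inr m, Sum.inr m' => m.1 = m'.1 ∧ m ≠ m'
    | _, _ => False
  black_symm := by
    rintro (u | u) (w | w) h
    · exact h.symm
    · exact h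
    · exact h
    · exact h.elim
  red_symm := by
    rintro (u | u) (w | w) h
    · exact h.elim
    · exact h.elim
    · exact h.elim
    · exact ⟨h.1.symm, h.2.symm⟩
  black_irrefl := by
    rintro (u | u) h
    · exact G.irrefl h
    · exact h
  red_irrefl := by
    rintro (u | u) h
    · exact h
    · exact h.2 rfl
  not_black_and_red := by
    rintro (u | u) (w | w) ⟨hb, hr⟩
    · exact hr
    · exact hr
    · exact hr
    · exact hb

/-- The parent separator `S_t` viewed inside `P̃_t`. -/
def sepIn [Fintype V] (D : RootedTreeDecomp G ι) (t : ι) : Finset (PtilV D t) :=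
  ((D.B t).attach.filter fun v => v.1 ∈ sep D t).image Sum.inl

/-! ### Partitions and merge steps -/

/-- `P` is a partition of the finite set `U` into nonempty parts. -/
def IsPart {V : Type*} (U : Finset V) (P : Finset (Finset V)) : Prop :=
  (∀ A ∈ P, A.Nonempty) ∧ (∀ A ∈ P, ∀ B ∈ P, ∀ v, v ∈ A → v ∈ B → A = B) ∧
    ∀ v, v ∈ U ↔ ∃ A ∈ P, v ∈ A

/-- The partition of `U` into singletons. -/
def singles {V : Type*} (U : Finset V) : Finset (Finset V) :=
  U.image fun v => ({v} : Finset V)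

/-- The partition of `U` into the fibres of `key`. -/
def fibres {V α : Type*} (U : Finset V) (key : V → α) : Finset (Finset V) :=
  U.image fun v => U.filter fun x => key x = key v

theorem isPart_singles {V : Type*} (U : Finset V) : IsPart U (singles U) := by
  refine ⟨?_, ?_, ?_⟩
  · intro A hA
    simp only [singles, Finset.mem_image] at hA
    obtain ⟨v, -, rfl⟩ := hA
    simp
  · intro A hA B hB v hvA hvB
    simp only [singles, Finset.mem_image] at hA hB
    obtain ⟨a, -, rfl⟩ := hA
    obtain ⟨b, -, rfl⟩ := hB
    simp_all
  · intro v
    simp [singles]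

theorem isPart_discretePart (V : Type*) [Fintype V] :
    IsPart (Finset.univ : Finset V) (discretePart V) :=
  isPart_singles _

theorem IsPart.merge {V : Type*} {U : Finset V} {P Q : Finset (Finset V)} (h : IsPart U P)
    (hm : MergeStep P Q) : IsPart U Q := by
  obtain ⟨A, hA, B, hB, hAB, rfl⟩ := hm
  obtain ⟨h1, h2, h3⟩ := h
  refine ⟨?_, ?_, ?_⟩
  · intro C hC
    simp only [Finset.mem_insert, Finset.mem_erase] at hC
    rcases hC with rfl | hC
    · exact (h1 A hA).mono Finset.subset_union_left
    · exact h1 C hC.2.2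
  · intro C hC C' hC' v hv hv'
    simp only [Finset.mem_insert, Finset.mem_erase] at hC hC'
    rcases hC with rfl | hC <;> rcases hC' with rfl | hC'
    · rfl
    · rcases Finset.mem_union.1 hv with hv | hv
      · exact absurd (h2 _ hC'.2.2 _ hA v hv' hv) hC'.2.1
      · exact absurd (h2 _ hC'.2.2 _ hB v hv' hv) hC'.1
    · rcases Finset.mem_union.1 hv' with hv' | hv'
      · exact absurd (h2 _ hC.2.2 _ hA v hv hv') hC.2.1
      · exact absurd (h2 _ hC.2.2 _ hB v hv hv') hC.1
    · exact h2 _ hC.2.2 _ hC'.2.2 v hv hv'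
  · intro v
    rw [h3]
    constructor
    · rintro ⟨C, hC, hv⟩
      by_cases hCA : C = A
      · exact ⟨A ∪ B, by simp, by simp [← hCA, hv]⟩
      by_cases hCB : C = B
      · exact ⟨A ∪ B, by simp, by simp [← hCB, hv]⟩
      exact ⟨C, by simp [hCA, hCB, hC], hv⟩
    · rintro ⟨C, hC, hv⟩
      simp only [Finset.mem_insert, Finset.mem_erase] at hC
      rcases hC with rfl | hC
      · rcases Finset.mem_union.1 hv with hv | hv
        · exact ⟨A, hA, hv⟩
        · exact ⟨B, hB, hv⟩
      · exact ⟨C, hC.2.2, hv⟩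

theorem IsPart.card_merge {V : Type*} {U : Finset V} {P Q : Finset (Finset V)} (h : IsPart U P)
    (hm : MergeStep P Q) : Q.card + 1 = P.card := by
  obtain ⟨A, hA, B, hB, hAB, rfl⟩ := hm
  obtain ⟨h1, h2, h3⟩ := h
  have hn : A ∪ B ∉ (P.erase A).erase B := by
    intro hC
    simp only [Finset.mem_erase] at hC
    obtain ⟨v, hv⟩ := h1 A hA
    exact hC.2.1 (h2 _ hC.2.2 _ hA v (by simp [hv]) hv)
  rw [Finset.card_insert_of_notMem hn, Finset.card_erase_of_mem (by simp [hB, hAB.symm]),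
    Finset.card_erase_of_mem hA]
  have : 1 < P.card := Finset.one_lt_card.2 ⟨A, hA, B, hB, hAB⟩
  omega

theorem IsPart.eq_of_subset {V : Type*} {U : Finset V} {P Q : Finset (Finset V)} (hP : IsPart U P)
    (hQ : IsPart U Q) (h : P ⊆ Q) : P = Q := by
  refine Finset.Subset.antisymm h fun A hA => ?_
  obtain ⟨v, hv⟩ := hQ.1 A hA
  obtain ⟨B, hB, hvB⟩ := (hP.2.2 v).1 ((hQ.2.2 v).2 ⟨A, hA, hv⟩)
  rwa [hQ.2.1 A hA B (h hB) v hv hvB]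

/-- A partition whose parts are exactly the level sets of `key` is the partition into fibres. -/
theorem IsPart.eq_fibres {V α : Type*} {U : Finset V} {P : Finset (Finset V)} (hP : IsPart U P)
    (key : V → α) (h : ∀ A ∈ P, ∀ B ∈ P, ∀ a ∈ A, ∀ b ∈ B, key a = key b ↔ A = B) :
    P = fibres U key := by
  have hfib : ∀ A ∈ P, ∀ v ∈ A, (U.filter fun x => key x = key v) = A := by
    intro A hA v hv
    ext x
    simp only [Finset.mem_filter]
    constructor
    · rintro ⟨hx, hk⟩
      obtain ⟨B, hB, hxB⟩ := (hP.2.2 x).1 hx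
      rwa [← (h B hB A hA x hxB v hv).1 hk]
    · intro hx
      exact ⟨(hP.2.2 x).2 ⟨A, hA, hx⟩, (h A hA A hA x hx v hv).2 rfl⟩
  ext A
  simp only [fibres, Finset.mem_image]
  constructor
  · intro hA
    obtain ⟨v, hv⟩ := hP.1 A hA
    exact ⟨v, (hP.2.2 v).2 ⟨A, hA, hv⟩, hfib A hA v hv⟩
  · rintro ⟨v, hv, rfl⟩
    obtain ⟨A, hA, hvA⟩ := (hP.2.2 v).1 hv
    rwa [hfib A hA v hvA]

theorem MergeStep.union {V : Type*} {U U' : Finset V} {P Q R : Finset (Finset V)}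
    (hP : IsPart U P) (hR : IsPart U' R) (hd : Disjoint U U') (hm : MergeStep P Q) :
    MergeStep (P ∪ R) (Q ∪ R) := by
  obtain ⟨A, hA, B, hB, hAB, rfl⟩ := hm
  have key : ∀ C ∈ P, C ∉ R := by
    intro C hC hC'
    obtain ⟨v, hv⟩ := hP.1 C hC
    exact Finset.disjoint_left.1 hd ((hP.2.2 v).2 ⟨C, hC, hv⟩) ((hR.2.2 v).2 ⟨C, hC', hv⟩)
  refine ⟨A, by simp [hA], B, by simp [hB], hAB, ?_⟩
  ext C
  have h1 := key A hA
  have h2 := key B hB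
  simp only [Finset.mem_union, Finset.mem_insert, Finset.mem_erase]
  by_cases hCA : C = A <;> by_cases hCB : C = B
  · simp_all
  · subst hCA; simp [h1, hAB]
  · subst hCB; simp [h2]
  · tauto

/-- Membership form of `MergeStep`, in which no decidable equality occurs. -/
theorem MergeStep.spec {V : Type*} {P Q : Finset (Finset V)} (hm : MergeStep P Q) :
    ∃ A ∈ P, ∃ B ∈ P, A ≠ B ∧ ∃ C, (∀ x, x ∈ C ↔ x ∈ A ∨ x ∈ B) ∧
      ∀ X, X ∈ Q ↔ X = C ∨ (X ≠ B ∧ X ≠ A ∧ X ∈ P) := by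
  obtain ⟨A, hA, B, hB, hAB, rfl⟩ := hm
  exact ⟨A, hA, B, hB, hAB, A ∪ B, by simp, by simp⟩

/-! ### Chains of good partitions -/

/-- `P` is a partition of `U`, each part is homogeneous to every vertex of `S`, and the quotient
has maximum red degree at most `w`. -/
structure Good {V : Type*} (G : SimpleGraph V) (w : ℕ) (S U : Finset V)
    (P : Finset (Finset V)) : Prop where
  part : IsPart U P
  hom : ∀ A ∈ P, ∀ a ∈ A, ∀ b ∈ A, ∀ s ∈ S, G.Adj a s → G.Adj b s
  deg : ∀ A ∈ P, G.toTrigraph.redDeg P A ≤ w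

/-- Merge steps leading to a partition of `U` that is good with respect to `S`. -/
def GStep {V : Type*} (G : SimpleGraph V) (w : ℕ) (S U : Finset V)
    (P Q : Finset (Finset V)) : Prop :=
  MergeStep P Q ∧ Good G w S U Q

theorem redAdj_iff {V : Type*} (G : SimpleGraph V) (A B : Finset V) :
    G.toTrigraph.redAdj A B ↔
      A ≠ B ∧ (∃ a ∈ A, ∃ b ∈ B, G.Adj a b) ∧ ¬ ∀ a ∈ A, ∀ b ∈ B, G.Adj a b := by
  simp [Trigraph.redAdj, SimpleGraph.toTrigraph]

theorem redAdj_symm {V : Type*} (G : SimpleGraph V) {A B : Finset V}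
    (h : G.toTrigraph.redAdj A B) : G.toTrigraph.redAdj B A := by
  rw [redAdj_iff] at h ⊢
  obtain ⟨h1, ⟨a, ha, b, hb, hab⟩, h3⟩ := h
  exact ⟨h1.symm, ⟨b, hb, a, ha, hab.symm⟩, fun h => h3 fun a ha b hb => (h b hb a ha).symm⟩

theorem good_singles {V : Type*} (G : SimpleGraph V) (w : ℕ) (S U : Finset V) :
    Good G w S U (singles U) := by
  refine ⟨isPart_singles U, ?_, ?_⟩
  · intro A hA a ha b hb s hs
    simp only [singles, Finset.mem_image] at hA
    obtain ⟨v, -, rfl⟩ := hA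
    simp_all
  · intro A hA
    simp only [singles, Finset.mem_image] at hA
    obtain ⟨v, -, rfl⟩ := hA
    refine le_trans (le_of_eq ?_) (Nat.zero_le w)
    rw [Trigraph.redDeg, Finset.card_eq_zero, Finset.filter_eq_empty_iff]
    intro B hB
    simp only [singles, Finset.mem_image] at hB
    obtain ⟨u, -, rfl⟩ := hB
    simp [redAdj_iff]

theorem Good.mono {V : Type*} {G : SimpleGraph V} {w : ℕ} {S S' U : Finset V}
    {P : Finset (Finset V)} (h : Good G w S U P)
    (hS : ∀ u ∈ U, ∀ s ∈ S', G.Adj u s → s ∈ S) : Good G w S' U P :=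
  ⟨h.part, fun A hA a ha b hb s hs hadj =>
    h.hom A hA a ha b hb s (hS a ((h.part.2.2 a).2 ⟨A, hA, ha⟩) s hs hadj) hadj, h.deg⟩

/-- No red edge joins a part of `P` to a part of `R`, provided that the vertices of `U'` with a
neighbor in `U` lie in `S` and are singleton parts of `R`. -/
theorem Good.union {V : Type*} {G : SimpleGraph V} {w : ℕ} {S U U' : Finset V}
    {P R : Finset (Finset V)} (hP : Good G w S U P) (hR : Good G w S U' R) (hd : Disjoint U U')
    (hUR : ∀ u ∈ U, ∀ u' ∈ U', G.Adj u u' → u' ∈ S ∧ {u'} ∈ R) :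
    Good G w S (U ∪ U') (P ∪ R) := by
  have hno : ∀ A ∈ P, ∀ B ∈ R, ¬ G.toTrigraph.redAdj A B := by
    intro A hA B hB hred
    rw [redAdj_iff] at hred
    obtain ⟨-, ⟨a, ha, b, hb, hab⟩, hall⟩ := hred
    obtain ⟨hbS, hbR⟩ := hUR a ((hP.part.2.2 a).2 ⟨A, hA, ha⟩) b
      ((hR.part.2.2 b).2 ⟨B, hB, hb⟩) hab
    have hBb : B = {b} := hR.part.2.1 B hB {b} hbR b hb (by simp)
    apply hall
    intro a' ha' b' hb'
    rw [hBb, Finset.mem_singleton] at hb'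
    subst hb'
    exact hP.hom A hA a ha a' ha' _ hbS hab
  have hdis : ∀ A ∈ P, ∀ B ∈ R, ∀ v, v ∈ A → v ∈ B → False := by
    intro A hA B hB v hvA hvB
    exact Finset.disjoint_left.1 hd ((hP.part.2.2 v).2 ⟨A, hA, hvA⟩)
      ((hR.part.2.2 v).2 ⟨B, hB, hvB⟩)
  refine ⟨⟨?_, ?_, ?_⟩, ?_, ?_⟩
  · intro A hA
    rcases Finset.mem_union.1 hA with hA | hA
    · exact hP.part.1 A hA
    · exact hR.part.1 A hA
  · intro A hA B hB v hvA hvB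
    rcases Finset.mem_union.1 hA with hA | hA <;> rcases Finset.mem_union.1 hB with hB | hB
    · exact hP.part.2.1 A hA B hB v hvA hvB
    · exact (hdis A hA B hB v hvA hvB).elim
    · exact (hdis B hB A hA v hvB hvA).elim
    · exact hR.part.2.1 A hA B hB v hvA hvB
  · intro v
    rw [Finset.mem_union, hP.part.2.2, hR.part.2.2]
    simp only [Finset.mem_union, or_and_right, exists_or]
  · intro A hA
    rcases Finset.mem_union.1 hA with hA | hA
    · exact hP.hom A hA
    · exact hR.hom A hA
  · intro A hA
    rcases Finset.mem_union.1 hA with hA | hA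
    · refine le_trans (Finset.card_le_card ?_) (hP.deg A hA)
      intro B hB
      simp only [Finset.mem_filter, Finset.mem_union] at hB ⊢
      rcases hB.1 with h | h
      · exact ⟨h, hB.2⟩
      · exact (hno A hA B h hB.2).elim
    · refine le_trans (Finset.card_le_card ?_) (hR.deg A hA)
      intro B hB
      simp only [Finset.mem_filter, Finset.mem_union] at hB ⊢
      rcases hB.1 with h | h
      · exact (hno B h A hA (redAdj_symm G hB.2)).elim
      · exact ⟨h, hB.2⟩

theorem chain_good {V : Type*} {G : SimpleGraph V} {w : ℕ} {S U : Finset V}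
    {P Q : Finset (Finset V)} (hP : Good G w S U P)
    (h : Relation.ReflTransGen (GStep G w S U) P Q) : Good G w S U Q := by
  induction h with
  | refl => exact hP
  | tail _ h _ => exact h.2

theorem chain_mono {V : Type*} {G : SimpleGraph V} {w : ℕ} {S S' U : Finset V}
    {P Q : Finset (Finset V)} (h : Relation.ReflTransGen (GStep G w S U) P Q)
    (hS : ∀ u ∈ U, ∀ s ∈ S', G.Adj u s → s ∈ S) :
    Relation.ReflTransGen (GStep G w S' U) P Q :=
  Relation.ReflTransGen.mono (fun _ _ h => ⟨h.1, h.2.mono hS⟩) _ _ h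

theorem chain_union {V : Type*} {G : SimpleGraph V} {w : ℕ} {S U U' : Finset V}
    {P Q R : Finset (Finset V)} (hP : Good G w S U P)
    (h : Relation.ReflTransGen (GStep G w S U) P Q)
    (hR : Good G w S U' R) (hd : Disjoint U U')
    (hUR : ∀ u ∈ U, ∀ u' ∈ U', G.Adj u u' → u' ∈ S ∧ {u'} ∈ R) :
    Relation.ReflTransGen (GStep G w S (U ∪ U')) (P ∪ R) (Q ∪ R) := by
  induction h with
  | refl => exact .refl
  | tail h1 h2 ih =>
    exact ih.tail ⟨h2.1.union (chain_good hP h1).part hR.part hd, h2.2.union hR hd hUR⟩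

theorem chain_to_fun {α : Type*} {r : α → α → Prop} {a b : α}
    (h : Relation.ReflTransGen r a b) :
    ∃ (n : ℕ) (f : ℕ → α), f 0 = a ∧ f n = b ∧ ∀ i < n, r (f i) (f (i + 1)) := by
  induction h using Relation.ReflTransGen.head_induction_on with
  | refl => exact ⟨0, fun _ => b, rfl, rfl, by simp⟩
  | head h _ ih =>
    rename_i x y _
    obtain ⟨n, f, h0, hn, hs⟩ := ih
    refine ⟨n + 1, fun i => Nat.casesOn i x f, rfl, hn, ?_⟩
    intro i hi
    cases i with
    | zero => simpa [h0] using h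
    | succ i => exact hs i (by omega)

theorem chain_of_fun {α : Type*} {r : α → α → Prop} (f : ℕ → α) (n : ℕ)
    (h : ∀ i < n, r (f i) (f (i + 1))) : Relation.ReflTransGen r (f 0) (f n) := by
  induction n with
  | zero => exact .refl
  | succ n ih => exact (ih fun i hi => h i (by omega)).tail (h n (by omega))

/-! ### Existence of complete contraction sequences -/

/-- As long as a partition respecting `A` is not complete, two parts with the same neighborhood
in `A` can be merged without creating red edges at `A`. -/
theorem exists_complete_chain {V : Type*} (T : Trigraph V) (A U : Finset V) :
    ∀ (n : ℕ) (P : Finset (Finset V)), P.card = n → IsPart U P → T.Respects A P →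
      ∃ Q, Relation.ReflTransGen (fun P Q => MergeStep P Q ∧ T.Respects A Q) P Q ∧
        T.CompleteFor A Q := by
  intro n
  induction n with
  | zero =>
    intro P hc _ _
    rw [Finset.card_eq_zero] at hc
    subst hc
    exact ⟨∅, .refl, by intro B hB; simp at hB⟩
  | succ n ih =>
    intro P hc hP hR
    by_cases hcomp : T.CompleteFor A P
    · exact ⟨P, .refl, hcomp⟩
    simp only [Trigraph.CompleteFor] at hcomp
    push Not at hcomp
    obtain ⟨B, hB, C, hC, hBC, hdB, hdC, hk⟩ := hcomp
    set Q := insert (B ∪ C) ((P.erase B).erase C) with hQ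
    have hm : MergeStep P Q := ⟨B, hB, C, hC, hBC, hQ⟩
    have hno : ∀ a ∈ A, ∀ D ∈ P, ¬ T.redAdj {a} D := by
      intro a ha D hD h
      have := hR.2 a ha
      rw [Trigraph.redDeg, Finset.card_eq_zero, Finset.filter_eq_empty_iff] at this
      exact this hD h
    have hne : ∀ a ∈ A, ∀ D, Disjoint D A → ({a} : Finset V) ≠ D := by
      intro a ha D hD h
      subst h
      simp [ha] at hD
    have hRQ : T.Respects A Q := by
      refine ⟨?_, ?_⟩
      · intro a ha
        simp only [hQ, Finset.mem_insert, Finset.mem_erase]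
        exact Or.inr ⟨hne a ha C hdC, hne a ha B hdB, hR.1 a ha⟩
      · intro a ha
        rw [Trigraph.redDeg, Finset.card_eq_zero, Finset.filter_eq_empty_iff]
        intro D hD
        simp only [hQ, Finset.mem_insert, Finset.mem_erase] at hD
        rcases hD with rfl | hD
        · have h1 := hno a ha B hB
          have h2 := hno a ha C hC
          have hka := hk a ha
          simp only [Trigraph.redAdj, hne a ha B hdB, hne a ha C hdC, ne_eq, not_false_eq_true,
            true_and, Finset.mem_singleton, exists_eq_left, forall_eq, not_or, not_and,
            not_not] at h1 h2
          intro h3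
          obtain ⟨-, ⟨x, hx, y, hy, hxy⟩ | ⟨⟨x, hx, y, hy, hxy⟩, hall⟩⟩ := h3
          · rw [Finset.mem_singleton] at hx
            subst hx
            rcases Finset.mem_union.1 hy with hy | hy
            · exact h1.1 ⟨y, hy, hxy⟩
            · exact h2.1 ⟨y, hy, hxy⟩
          · rw [Finset.mem_singleton] at hx
            subst hx
            apply hall
            have hBx : ∃ b ∈ B, T.black b x := by
              rcases Finset.mem_union.1 hy with hy | hy
              · exact ⟨y, hy, T.black_symm _ _ hxy⟩
              · exact hka.2 ⟨y, hy, T.black_symm _ _ hxy⟩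
            obtain ⟨b, hb, hbx⟩ := hBx
            obtain ⟨c, hc', hcx⟩ := hka.1 ⟨b, hb, hbx⟩
            intro a' ha' z hz
            rw [Finset.mem_singleton] at ha'
            subst ha'
            rcases Finset.mem_union.1 hz with hz | hz
            · exact h1.2 ⟨b, hb, T.black_symm _ _ hbx⟩ z hz
            · exact h2.2 ⟨c, hc', T.black_symm _ _ hcx⟩ z hz
        · exact hno a ha D hD.2.2
    obtain ⟨Q', hQ', hcQ'⟩ := ih Q (by have := hP.card_merge hm; omega) (hP.merge hm) hRQ
    exact ⟨Q', hQ'.head ⟨hm, hRQ⟩, hcQ'⟩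

/-- The infimum defining `twwR` is attained as soon as no red edge meets `A`. -/
theorem exists_of_twwR_le {V : Type*} [Fintype V] (T : Trigraph V) (A : Finset V) (w : ℕ)
    (hA : ∀ a ∈ A, ∀ b, ¬ T.red a b) (h : T.twwR A ≤ w) :
    ∃ (len : ℕ) (f : ℕ → Finset (Finset V)), IsCSeq V len f ∧
      (∀ i ≤ len, T.Respects A (f i)) ∧ T.CompleteFor A (f len) ∧
      ∀ i ≤ len, T.maxRedDeg (f i) ≤ w := by
  have hR0 : T.Respects A (discretePart V) := by
    refine ⟨fun a _ => by simp [discretePart], ?_⟩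
    intro a ha
    rw [Trigraph.redDeg, Finset.card_eq_zero, Finset.filter_eq_empty_iff]
    intro D hD
    simp only [discretePart, Finset.mem_image] at hD
    obtain ⟨v, -, rfl⟩ := hD
    simp [Trigraph.redAdj, hA a ha]
  obtain ⟨Q, hQ, hc⟩ := exists_complete_chain T A Finset.univ _ _ rfl (isPart_discretePart V) hR0
  obtain ⟨n, f, h0, hn, hs⟩ := chain_to_fun hQ
  have hne : { w | ∃ (len : ℕ) (f : ℕ → Finset (Finset V)), IsCSeq V len f ∧
      (∀ i ≤ len, T.Respects A (f i)) ∧ T.CompleteFor A (f len) ∧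
      ∀ i ≤ len, T.maxRedDeg (f i) ≤ w }.Nonempty := by
    refine ⟨(Finset.range (n + 1)).sup fun i => T.maxRedDeg (f i), n, f,
      ⟨h0, fun i hi => (hs i hi).1⟩, ?_, by rwa [hn], ?_⟩
    · intro i hi
      cases i with
      | zero => rwa [h0]
      | succ i => exact (hs i (by omega)).2
    · intro i hi
      exact Finset.le_sup (f := fun i => T.maxRedDeg (f i)) (Finset.mem_range.2 (by omega))
  obtain ⟨len, f, h1, h2, h3, h4⟩ := Nat.sInf_mem hne
  exact ⟨len, f, h1, h2, h3, fun i hi => (h4 i hi).trans h⟩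

/-! ### Structure of the tree decomposition -/

/-- The vertices of `G_t - S_t`. -/
def own {V ι : Type*} [Fintype V] {G : SimpleGraph V} (D : RootedTreeDecomp G ι) (t : ι) :
    Finset V :=
  subVerts D t \ sep D t

/-- The partition of `G_t - S_t` according to the neighborhood in `S_t`. -/
def classes {V ι : Type*} [Fintype V] {G : SimpleGraph V} (D : RootedTreeDecomp G ι) (t : ι) :
    Finset (Finset V) :=
  fibres (own D t) fun v => (sep D t).filter fun s => G.Adj v s

section Tree

variable {V ι : Type*} {G : SimpleGraph V} (D : RootedTreeDecomp G ι)

theorem iterate_par_root (n : ℕ) : D.par^[n] D.root = D.root :=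
  Function.iterate_fixed D.par_root n

theorem child_ne_root {t c : ι} (h : D.par c = t) (hne : c ≠ t) : c ≠ D.root := by
  rintro rfl
  rw [D.par_root] at h
  exact hne h

/-- A periodic node is the root, since iterating `par` from it reaches the root. -/
theorem eq_root_of_periodic {c : ι} {p : ℕ} (hp : 0 < p) (h : D.par^[p] c = c) :
    c = D.root := by
  obtain ⟨k, hk⟩ := D.reaches c
  have h1 : D.par^[p * k] c = c := by
    rw [Function.iterate_mul]
    exact Function.iterate_fixed h k
  obtain ⟨j, hj⟩ := Nat.exists_eq_add_of_le (Nat.le_mul_of_pos_left k hp)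
  rw [hj, add_comm, Function.iterate_add_apply, hk, iterate_par_root] at h1
  exact h1.symm

theorem not_descOf_child {t c : ι} (h : D.par c = t) (hne : c ≠ t) : ¬ descOf D c t := by
  rintro ⟨m, hm⟩
  refine child_ne_root D h hne (eq_root_of_periodic D (Nat.succ_pos m) ?_)
  rw [Function.iterate_succ_apply, h, hm]

theorem descOf_trans {a b c : ι} (h1 : descOf D a b) (h2 : descOf D b c) : descOf D a c := by
  obtain ⟨m, rfl⟩ := h1
  obtain ⟨n, rfl⟩ := h2
  exact ⟨m + n, by rw [Function.iterate_add_apply]⟩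

theorem eq_of_common_desc {t c c' s : ι} (hc : D.par c = t ∧ c ≠ t) (hc' : D.par c' = t ∧ c' ≠ t)
    (h : descOf D c s) (h' : descOf D c' s) : c = c' := by
  have aux : ∀ {c c' : ι} {m m' : ℕ}, D.par c = t ∧ c ≠ t → D.par c' = t ∧ c' ≠ t → m ≤ m' →
      D.par^[m] s = c → D.par^[m'] s = c' → c = c' := by
    intro c c' m m' hc hc' hmm h h'
    obtain ⟨d, rfl⟩ := Nat.exists_eq_add_of_le hmm
    rw [add_comm, Function.iterate_add_apply, h] at h'
    cases d with
    | zero => exact h'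
    | succ d =>
      rw [Function.iterate_succ_apply, hc.1] at h'
      exact (not_descOf_child D hc'.1 hc'.2 ⟨d, h'⟩).elim
  obtain ⟨m, h⟩ := h
  obtain ⟨m', h'⟩ := h'
  rcases le_total m m' with hm | hm
  · exact aux hc hc' hm h h'
  · exact (aux hc' hc hm h' h).symm

theorem sep_child {t c : ι} (h : D.par c = t ∧ c ≠ t) : sep D c = D.B c ∩ D.B t := by
  rw [sep, if_neg (child_ne_root D h.1 h.2), h.1]

theorem sep_subset (t : ι) : sep D t ⊆ D.B t := by
  unfold sep
  split_ifs
  · simp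
  · exact Finset.inter_subset_left

variable [Fintype V]

theorem mem_subVerts {c : ι} {v : V} :
    v ∈ subVerts D c ↔ ∃ t, descOf D c t ∧ v ∈ D.B t := by
  simp [subVerts]

theorem bag_subset_subVerts (t : ι) : D.B t ⊆ subVerts D t := fun _ hv =>
  (mem_subVerts D).2 ⟨t, ⟨0, rfl⟩, hv⟩

theorem subVerts_child_subset {t c : ι} (h : D.par c = t) : subVerts D c ⊆ subVerts D t := by
  intro v hv
  obtain ⟨s, hs, hvs⟩ := (mem_subVerts D).1 hv
  exact (mem_subVerts D).2 ⟨s, descOf_trans D ⟨1, h⟩ hs, hvs⟩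

/-- All bags containing a vertex of `G_c - S_c` lie in the subtree at `c`. -/
theorem descOf_of_mem_own {t c : ι} (h : D.par c = t ∧ c ≠ t) {v : V} (hv : v ∈ own D c) :
    ∀ s, v ∈ D.B s → descOf D c s := by
  simp only [own, Finset.mem_sdiff, mem_subVerts, sep_child D h] at hv
  obtain ⟨⟨s, ⟨n, hn⟩, hvs⟩, hnot⟩ := hv
  induction n generalizing s with
  | zero =>
    simp only [Function.iterate_zero, id] at hn
    subst hn
    rcases D.subtree v s hvs with h1 | h1
    · rw [h.1] at h1
      exact (hnot (Finset.mem_inter.2 ⟨hvs, h1⟩)).elim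
    · exact h1
  | succ n ih =>
    rw [Function.iterate_succ_apply] at hn
    rcases D.subtree v s hvs with h1 | h1
    · exact ih (D.par s) h1 hn
    · intro s' hs'
      refine descOf_trans D (b := s) ⟨n + 1, ?_⟩ (h1 s' hs')
      rw [Function.iterate_succ_apply, hn]

theorem not_mem_bag_of_mem_own {t c : ι} (h : D.par c = t ∧ c ≠ t) {v : V} (hv : v ∈ own D c) :
    v ∉ D.B t := fun hvt => not_descOf_child D h.1 h.2 (descOf_of_mem_own D h hv t hvt)

theorem mem_subVerts_of_adj {t c : ι} (h : D.par c = t ∧ c ≠ t) {v u : V} (hv : v ∈ own D c)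
    (hadj : G.Adj v u) : u ∈ subVerts D c := by
  obtain ⟨s, hvs, hus⟩ := D.edge v u hadj
  exact (mem_subVerts D).2 ⟨s, descOf_of_mem_own D h hv s hvs, hus⟩

theorem mem_sep_of_adj {t c : ι} (h : D.par c = t ∧ c ≠ t) {v u : V} (hv : v ∈ own D c)
    (hu : u ∈ D.B t) (hadj : G.Adj v u) : u ∈ sep D c := by
  by_contra hn
  exact not_mem_bag_of_mem_own D h
    (Finset.mem_sdiff.2 ⟨mem_subVerts_of_adj D h hv hadj, hn⟩) hu

theorem eq_of_mem_own {t c c' : ι} (h : D.par c = t ∧ c ≠ t) (h' : D.par c' = t ∧ c' ≠ t) {v : V}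
    (hv : v ∈ own D c) (hv' : v ∈ own D c') : c = c' := by
  obtain ⟨s, hs⟩ := D.cover v
  exact eq_of_common_desc D h h' (descOf_of_mem_own D h hv s hs) (descOf_of_mem_own D h' hv' s hs)

theorem eq_of_adj_own {t c c' : ι} (h : D.par c = t ∧ c ≠ t) (h' : D.par c' = t ∧ c' ≠ t)
    {v u : V} (hv : v ∈ own D c) (hu : u ∈ own D c') (hadj : G.Adj v u) : c = c' := by
  obtain ⟨s, hvs, hus⟩ := D.edge v u hadj
  exact eq_of_common_desc D h h' (descOf_of_mem_own D h hv s hvs) (descOf_of_mem_own D h' hu s hus)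

theorem own_child_subset {t c : ι} (h : D.par c = t ∧ c ≠ t) : own D c ⊆ own D t := by
  intro v hv
  exact Finset.mem_sdiff.2 ⟨subVerts_child_subset D h.1 (Finset.mem_sdiff.1 hv).1,
    fun hs => not_mem_bag_of_mem_own D h hv (sep_subset D t hs)⟩

theorem mem_subVerts_cases {t : ι} {v : V} (hv : v ∈ subVerts D t) :
    v ∈ D.B t ∨ ∃ c, (D.par c = t ∧ c ≠ t) ∧ v ∈ own D c := by
  obtain ⟨s, ⟨n, hn⟩, hvs⟩ := (mem_subVerts D).1 hv
  induction n with
  | zero =>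
    simp only [Function.iterate_zero, id] at hn
    subst hn
    exact Or.inl hvs
  | succ n ih =>
    by_cases hc : D.par^[n] s = t
    · exact ih hc
    rw [Function.iterate_succ_apply'] at hn
    by_cases hvt : v ∈ D.B t
    · exact Or.inl hvt
    refine Or.inr ⟨D.par^[n] s, ⟨hn, hc⟩, ?_⟩
    rw [own, Finset.mem_sdiff, sep_child D ⟨hn, hc⟩]
    exact ⟨(mem_subVerts D).2 ⟨s, ⟨n, rfl⟩, hvs⟩, fun h => hvt (Finset.mem_inter.1 h).2⟩

theorem own_eq [Fintype ι] (t : ι) :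
    own D t = (Finset.univ.filter fun c => D.par c = t ∧ c ≠ t).biUnion (own D) ∪
      (D.B t \ sep D t) := by
  ext v
  simp only [Finset.mem_union, Finset.mem_biUnion, Finset.mem_filter, Finset.mem_univ, true_and]
  constructor
  · intro hv
    obtain ⟨h1, h2⟩ := Finset.mem_sdiff.1 hv
    rcases mem_subVerts_cases D h1 with h | ⟨c, hc, hvc⟩
    · exact Or.inr (Finset.mem_sdiff.2 ⟨h, h2⟩)
    · exact Or.inl ⟨c, hc, hvc⟩
  · rintro (⟨c, hc, hvc⟩ | h)
    · exact own_child_subset D hc hvc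
    · exact Finset.sdiff_subset_sdiff (bag_subset_subVerts D t) subset_rfl h

theorem own_root : own D D.root = Finset.univ := by
  ext v
  simp only [own, sep, if_true, Finset.sdiff_empty, Finset.mem_univ, iff_true]
  obtain ⟨s, hs⟩ := D.cover v
  exact (mem_subVerts D).2 ⟨s, D.reaches s, hs⟩

theorem classes_root [Nonempty V] : classes D D.root = {Finset.univ} := by
  ext A
  simp [classes, fibres, own_root, sep, eq_comm]

/-! ### Contracting the subtrees of the children -/

/-- The sequences of distinct children combine, keeping all parts homogeneous to the bag of `t`. -/
theorem children_chain (w : ℕ) (t : ι)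
    (ih : ∀ c, D.par c = t ∧ c ≠ t →
      Relation.ReflTransGen (GStep G w (sep D c) (own D c)) (singles (own D c)) (classes D c))
    (s : Finset ι) (hs : ∀ c ∈ s, D.par c = t ∧ c ≠ t) :
    Relation.ReflTransGen (GStep G w (D.B t) (s.biUnion (own D)))
      (singles (s.biUnion (own D))) (s.biUnion (classes D)) := by
  induction s using Finset.induction_on with
  | empty => exact .refl
  | insert c s hcs ih' =>
    have hc := hs c (by simp)
    have hs' : ∀ c' ∈ s, D.par c' = t ∧ c' ≠ t := fun c' h => hs c' (by simp [h])
    have h1 := ih' hs'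
    have h2 := chain_mono (S' := D.B t) (ih c hc)
      fun u hu v hv hadj => mem_sep_of_adj D hc hu hv hadj
    have hd : Disjoint (own D c) (s.biUnion (own D)) := by
      rw [Finset.disjoint_left]
      intro v hv hv'
      obtain ⟨c', hc', hv'⟩ := Finset.mem_biUnion.1 hv'
      exact hcs ((eq_of_mem_own D hc (hs' c' hc') hv hv') ▸ hc')
    have hadj : ∀ u ∈ own D c, ∀ u' ∈ s.biUnion (own D), ¬ G.Adj u u' := by
      intro u hu u' hu' hadj
      obtain ⟨c', hc', hu'⟩ := Finset.mem_biUnion.1 hu'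
      exact hcs ((eq_of_adj_own D hc (hs' c' hc') hu hu' hadj) ▸ hc')
    have e1 := chain_union (good_singles G w _ _) h1 (good_singles G w (D.B t) (own D c)) hd.symm
      fun u hu u' hu' h => (hadj u' hu' u hu h.symm).elim
    have e2 := chain_union (good_singles G w _ _) h2 (chain_good (good_singles G w _ _) h1) hd
      fun u hu u' hu' h => (hadj u hu u' hu' h).elim
    rw [Finset.union_comm (s.biUnion _) (own D c), Finset.union_comm (s.biUnion _)] at e1
    rw [Finset.biUnion_insert, Finset.biUnion_insert]
    refine Relation.ReflTransGen.trans ?_ e2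
    rw [Finset.union_comm (singles _)] at e1
    rwa [singles, Finset.image_union]

/-! ### Pulling back partitions of the augmented part -/

/-- `Represents D t v x`: the vertex `v` of `G_t` is represented by the vertex `x` of the augmented
part, i.e. `x` is `v` itself, or `x` is the fresh vertex of the neighborhood of `v`. -/
def Represents (t : ι) (v : V) (x : PtilV D t) : Prop :=
  match x with
  | Sum.inl u => v = u.1
  | Sum.inr m => v ∈ own D m.1.1 ∧ ((sep D m.1.1).filter fun s => G.Adj v s) = m.2.1

/-- The set of vertices of `G_t` represented by an element of `A`. -/
def pull (t : ι) (A : Finset (PtilV D t)) : Finset V :=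
  Finset.univ.filter fun v => ∃ x ∈ A, Represents D t v x

variable {D} {t : ι}

theorem mem_pull {A : Finset (PtilV D t)} {v : V} :
    v ∈ pull D t A ↔ ∃ x ∈ A, Represents D t v x := by
  simp [pull]

theorem rel_unique {v : V} {x y : PtilV D t} (hx : Represents D t v x) (hy : Represents D t v y) : x = y := by
  rcases x with ⟨u, hu⟩ | ⟨⟨c, hc⟩, ⟨M, hM⟩⟩ <;>
    rcases y with ⟨u', hu'⟩ | ⟨⟨c', hc'⟩, ⟨M', hM'⟩⟩ <;> simp only [Represents] at hx hy
  · subst hx; subst hy; rfl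
  · subst hx
    exact (not_mem_bag_of_mem_own D hc' hy.1 hu).elim
  · subst hy
    exact (not_mem_bag_of_mem_own D hc hx.1 hu').elim
  · obtain rfl := eq_of_mem_own D hc hc' hx.1 hy.1
    obtain rfl : M = M' := hx.2.symm.trans hy.2
    rfl

theorem rel_surj (x : PtilV D t) : ∃ v, Represents D t v x := by
  rcases x with ⟨u, hu⟩ | ⟨⟨c, hc⟩, ⟨M, hM⟩⟩
  · exact ⟨u, rfl⟩
  · have hM' := hM
    simp only [nbhds, Finset.mem_image] at hM'
    obtain ⟨v, hv, hvM⟩ := hM'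
    exact ⟨v, hv, hvM⟩

theorem rel_exists {v : V} (hv : v ∈ subVerts D t) : ∃ x, Represents D t v x := by
  rcases mem_subVerts_cases D hv with h | ⟨c, hc, hvc⟩
  · exact ⟨Sum.inl ⟨v, h⟩, rfl⟩
  · exact ⟨Sum.inr ⟨⟨c, hc⟩, ⟨_, Finset.mem_image_of_mem _ hvc⟩⟩, hvc, rfl⟩

theorem mem_sepIn_inl {u : {v // v ∈ D.B t}} :
    (Sum.inl u : PtilV D t) ∈ sepIn D t ↔ u.1 ∈ sep D t := by
  simp [sepIn]

theorem not_mem_sepIn_inr {m : Σ c : Child D t, {M : Finset V // M ∈ nbhds D c.1}} :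
    (Sum.inr m : PtilV D t) ∉ sepIn D t := by
  simp [sepIn]

theorem rel_own {v : V} {x : PtilV D t} (h : Represents D t v x) : v ∈ own D t ↔ x ∉ sepIn D t := by
  rcases x with ⟨u, hu⟩ | ⟨⟨c, hc⟩, ⟨M, hM⟩⟩
  · simp only [Represents] at h
    subst h
    rw [mem_sepIn_inl, own, Finset.mem_sdiff]
    exact and_iff_right (bag_subset_subVerts D t hu)
  · exact iff_of_true (own_child_subset D hc h.1) not_mem_sepIn_inr

theorem rel_black {v u : V} {x y : PtilV D t} (hx : Represents D t v x) (hy : Represents D t u y)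
    (h : (Ptil D t).black x y) : G.Adj v u := by
  rcases x with ⟨a, ha⟩ | ⟨⟨c, hc⟩, ⟨M, hM⟩⟩ <;>
    rcases y with ⟨b, hb⟩ | ⟨⟨c', hc'⟩, ⟨M', hM'⟩⟩ <;> simp only [Represents] at hx hy <;>
    simp only [Ptil] at h
  · subst hx; subst hy; exact h
  · subst hx
    rw [← hy.2, Finset.mem_filter] at h
    exact h.2.symm
  · subst hy
    rw [← hx.2, Finset.mem_filter] at h
    exact h.2

theorem rel_adj {v u : V} {x y : PtilV D t} (hx : Represents D t v x) (hy : Represents D t u y)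
    (h : G.Adj v u) : x = y ∨ (Ptil D t).red x y ∨ (Ptil D t).black x y := by
  rcases x with ⟨a, ha⟩ | ⟨⟨c, hc⟩, ⟨M, hM⟩⟩ <;>
    rcases y with ⟨b, hb⟩ | ⟨⟨c', hc'⟩, ⟨M', hM'⟩⟩ <;> simp only [Represents] at hx hy
  · subst hx; subst hy; exact Or.inr (Or.inr h)
  · subst hx
    refine Or.inr (Or.inr ?_)
    change _ ∈ M'
    rw [← hy.2, Finset.mem_filter]
    exact ⟨mem_sep_of_adj D hc' hy.1 ha h.symm, h.symm⟩
  · subst hy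
    refine Or.inr (Or.inr ?_)
    change _ ∈ M
    rw [← hx.2, Finset.mem_filter]
    exact ⟨mem_sep_of_adj D hc hx.1 hb h, h⟩
  · obtain rfl := eq_of_adj_own D hc hc' hx.1 hy.1 h
    by_cases hMM : M = M'
    · subst hMM; exact Or.inl rfl
    · refine Or.inr (Or.inl ⟨rfl, ?_⟩)
      simpa using hMM

theorem pull_injective : Function.Injective (pull D t) := by
  have aux : ∀ A B : Finset (PtilV D t), pull D t A = pull D t B → A ⊆ B := by
    intro A B h x hx
    obtain ⟨v, hv⟩ := rel_surj x
    have : v ∈ pull D t B := h ▸ mem_pull.2 ⟨x, hx, hv⟩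
    obtain ⟨y, hy, hvy⟩ := mem_pull.1 this
    rwa [rel_unique hv hvy]
  exact fun A B h => (aux A B h).antisymm (aux B A h.symm)

/-- A red edge between pulled-back parts comes from a red edge of the augmented part. -/
theorem redAdj_of_pull {A B : Finset (PtilV D t)} (hAB : ∀ x, x ∈ A → x ∈ B → A = B)
    (h : G.toTrigraph.redAdj (pull D t A) (pull D t B)) : (Ptil D t).redAdj A B := by
  rw [redAdj_iff] at h
  obtain ⟨hne, ⟨a, ha, b, hb, hab⟩, hall⟩ := h
  have hne' : A ≠ B := fun h => hne (h ▸ rfl)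
  refine ⟨hne', ?_⟩
  obtain ⟨x, hx, hax⟩ := mem_pull.1 ha
  obtain ⟨y, hy, hby⟩ := mem_pull.1 hb
  rcases rel_adj hax hby hab with rfl | hr | hbl
  · exact (hne' (hAB x hx hy)).elim
  · exact Or.inl ⟨x, hx, y, hy, hr⟩
  · refine Or.inr ⟨⟨x, hx, y, hy, hbl⟩, fun h => hall ?_⟩
    intro a' ha' b' hb'
    obtain ⟨x', hx', hax'⟩ := mem_pull.1 ha'
    obtain ⟨y', hy', hby'⟩ := mem_pull.1 hb'
    exact rel_black hax' hby' (h x' hx' y' hy')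

/-- The partition of `G_t - S_t` induced by a partition of the augmented part: parts meeting
`S_t` are dropped. -/
def pullPart (D : RootedTreeDecomp G ι) (t : ι) (P : Finset (Finset (PtilV D t))) :
    Finset (Finset V) :=
  (P.filter fun A => Disjoint A (sepIn D t)).image (pull D t)

end Tree

section Parts

variable {V ι : Type*} [Fintype V] {G : SimpleGraph V} {D : RootedTreeDecomp G ι}
  {t : ι}

theorem mem_pullPart {P : Finset (Finset (PtilV D t))} {X : Finset V} :
    X ∈ pullPart D t P ↔ ∃ A ∈ P, Disjoint A (sepIn D t) ∧ pull D t A = X := by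
  simp [pullPart, and_assoc]

variable [Fintype ι]

theorem eq_singleton_of_respects {P : Finset (Finset (PtilV D t))} (hP : IsPart Finset.univ P)
    (hR : (Ptil D t).Respects (sepIn D t) P) {A : Finset (PtilV D t)} (hA : A ∈ P)
    {x : PtilV D t} (hx : x ∈ A) (hxs : x ∈ sepIn D t) : A = {x} :=
  hP.2.1 A hA {x} (hR.1 x hxs) x hx (by simp)

/-- Respecting `S_t` means that the parts outside `S_t` are homogeneous to its vertices. -/
theorem pull_hom {P : Finset (Finset (PtilV D t))}
    (hR : (Ptil D t).Respects (sepIn D t) P) {A : Finset (PtilV D t)} (hA : A ∈ P)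
    (hd : Disjoint A (sepIn D t)) {s : V} (hs : s ∈ sep D t) :
    (∀ a ∈ pull D t A, G.Adj a s → ∀ y ∈ A, (Ptil D t).black y (Sum.inl ⟨s, sep_subset D t hs⟩)) ∧
      ∀ y ∈ A, (Ptil D t).black y (Sum.inl ⟨s, sep_subset D t hs⟩) →
        ∀ a ∈ pull D t A, G.Adj a s := by
  set σ : PtilV D t := Sum.inl ⟨s, sep_subset D t hs⟩ with hσ
  have hσs : σ ∈ sepIn D t := mem_sepIn_inl.2 hs
  have hno : ¬ (Ptil D t).redAdj {σ} A := by
    have := hR.2 σ hσs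
    rw [Trigraph.redDeg, Finset.card_eq_zero, Finset.filter_eq_empty_iff] at this
    exact this hA
  have hσA : σ ∉ A := fun h => Finset.disjoint_left.1 hd h hσs
  have hne : ({σ} : Finset (PtilV D t)) ≠ A := by
    intro h
    exact hσA (h ▸ Finset.mem_singleton_self σ)
  have hall : ∀ y ∈ A, (Ptil D t).black y σ → ∀ z ∈ A, (Ptil D t).black z σ := by
    intro y hy hyσ z hz
    by_contra hzn
    refine hno ⟨hne, Or.inr ⟨⟨σ, by simp, y, hy, (Ptil D t).black_symm _ _ hyσ⟩, fun h => hzn ?_⟩⟩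
    exact (Ptil D t).black_symm _ _ (h σ (by simp) z hz)
  have hσr : Represents D t s σ := rfl
  refine ⟨?_, ?_⟩
  · intro a ha has y hy
    obtain ⟨x, hx, hax⟩ := mem_pull.1 ha
    refine hall x hx ?_ y hy
    rcases rel_adj hax hσr has with h | h | h
    · exact (hσA (h ▸ hx)).elim
    · rcases x with x | x <;> exact h.elim
    · exact h
  · intro y hy hyσ a ha
    obtain ⟨x, hx, hax⟩ := mem_pull.1 ha
    exact rel_black hax hσr (hall y hy hyσ x hx)

theorem pullPart_good {w : ℕ} {P : Finset (Finset (PtilV D t))} (hP : IsPart Finset.univ P)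
    (hR : (Ptil D t).Respects (sepIn D t) P) (hw : (Ptil D t).maxRedDeg P ≤ w) :
    Good G w (sep D t) (own D t) (pullPart D t P) := by
  refine ⟨⟨?_, ?_, ?_⟩, ?_, ?_⟩
  · intro X hX
    obtain ⟨A, hA, -, rfl⟩ := mem_pullPart.1 hX
    obtain ⟨x, hx⟩ := hP.1 A hA
    obtain ⟨v, hv⟩ := rel_surj x
    exact ⟨v, mem_pull.2 ⟨x, hx, hv⟩⟩
  · intro X hX Y hY v hvX hvY
    obtain ⟨A, hA, -, rfl⟩ := mem_pullPart.1 hX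
    obtain ⟨B, hB, -, rfl⟩ := mem_pullPart.1 hY
    obtain ⟨x, hx, hvx⟩ := mem_pull.1 hvX
    obtain ⟨y, hy, hvy⟩ := mem_pull.1 hvY
    obtain rfl := rel_unique hvx hvy
    rw [hP.2.1 A hA B hB x hx hy]
  · intro v
    constructor
    · intro hv
      obtain ⟨x, hvx⟩ := rel_exists (Finset.mem_sdiff.1 hv).1
      have hxs := (rel_own hvx).1 hv
      obtain ⟨A, hA, hxA⟩ := (hP.2.2 x).1 (Finset.mem_univ x)
      refine ⟨pull D t A, mem_pullPart.2 ⟨A, hA, ?_, rfl⟩, mem_pull.2 ⟨x, hxA, hvx⟩⟩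
      rw [Finset.disjoint_left]
      intro y hy hys
      have hAy := eq_singleton_of_respects hP hR hA hy hys
      rw [hAy, Finset.mem_singleton] at hxA
      exact hxs (hxA ▸ hys)
    · rintro ⟨X, hX, hvX⟩
      obtain ⟨A, hA, hd, rfl⟩ := mem_pullPart.1 hX
      obtain ⟨x, hx, hvx⟩ := mem_pull.1 hvX
      exact (rel_own hvx).2 (Finset.disjoint_left.1 hd hx)
  · intro X hX a ha b hb s hs has
    obtain ⟨A, hA, hd, rfl⟩ := mem_pullPart.1 hX
    obtain ⟨h1, h2⟩ := pull_hom hR hA hd hs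
    obtain ⟨x, hx, -⟩ := mem_pull.1 ha
    exact h2 x hx (h1 a ha has x hx) b hb
  · intro X hX
    obtain ⟨A, hA, -, rfl⟩ := mem_pullPart.1 hX
    refine le_trans ?_ ((Finset.le_sup (f := fun A => (Ptil D t).redDeg P A) hA).trans hw)
    refine le_trans (Finset.card_le_card (t := (P.filter fun B =>
      (Ptil D t).redAdj A B).image (pull D t)) ?_) Finset.card_image_le
    intro Y hY
    obtain ⟨hY, hred⟩ := Finset.mem_filter.1 hY
    obtain ⟨B, hB, -, rfl⟩ := mem_pullPart.1 hY
    exact Finset.mem_image_of_mem _ (Finset.mem_filter.2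
      ⟨hB, redAdj_of_pull (fun x hx hx' => hP.2.1 A hA B hB x hx hx') hred⟩)

theorem pullPart_merge {P Q : Finset (Finset (PtilV D t))} (hP : IsPart Finset.univ P)
    (hQ : (Ptil D t).Respects (sepIn D t) Q) (hm : MergeStep P Q) :
    MergeStep (pullPart D t P) (pullPart D t Q) := by
  have hQP := hP.merge hm
  obtain ⟨A, hA, B, hB, hAB, C, hC, hCQ⟩ := hm.spec
  -- A part of `Q` meeting `S_t` is a singleton, whereas the merged part `C` is not one.
  have hd : Disjoint C (sepIn D t) := by
    rw [Finset.disjoint_left]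
    intro x hx hxs
    have h := eq_singleton_of_respects hQP hQ ((hCQ C).2 (Or.inl rfl)) hx hxs
    obtain ⟨a, ha⟩ := hP.1 A hA
    obtain ⟨b, hb⟩ := hP.1 B hB
    have ha' := (hC a).2 (Or.inl ha)
    have hb' := (hC b).2 (Or.inr hb)
    rw [h, Finset.mem_singleton] at ha' hb'
    subst ha'; subst hb'
    exact hAB (hP.2.1 A hA B hB _ ha hb)
  have hdA : Disjoint A (sepIn D t) :=
    Finset.disjoint_left.2 fun x hx => Finset.disjoint_left.1 hd ((hC x).2 (Or.inl hx))
  have hdB : Disjoint B (sepIn D t) :=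
    Finset.disjoint_left.2 fun x hx => Finset.disjoint_left.1 hd ((hC x).2 (Or.inr hx))
  have hpull : pull D t A ∪ pull D t B = pull D t C := by
    ext v
    simp only [Finset.mem_union, mem_pull, hC, or_and_right, exists_or]
  refine ⟨pull D t A, mem_pullPart.2 ⟨A, hA, hdA, rfl⟩, pull D t B,
    mem_pullPart.2 ⟨B, hB, hdB, rfl⟩, fun h => hAB (pull_injective h), ?_⟩
  ext X
  simp only [Finset.mem_insert, Finset.mem_erase, mem_pullPart, hpull, hCQ]
  constructor
  · rintro ⟨E, rfl | ⟨hEB, hEA, hE⟩, hdE, rfl⟩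
    · exact Or.inl rfl
    · exact Or.inr ⟨fun h => hEB (pull_injective h), fun h => hEA (pull_injective h),
        E, hE, hdE, rfl⟩
  · rintro (rfl | ⟨hEB, hEA, E, hE, hdE, rfl⟩)
    · exact ⟨C, Or.inl rfl, hd, rfl⟩
    · exact ⟨E, Or.inr ⟨fun h => hEB (h ▸ rfl), fun h => hEA (h ▸ rfl), hE⟩, hdE, rfl⟩

theorem pullPart_complete {w : ℕ} {P : Finset (Finset (PtilV D t))} (hP : IsPart Finset.univ P)
    (hR : (Ptil D t).Respects (sepIn D t) P) (hw : (Ptil D t).maxRedDeg P ≤ w)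
    (hc : (Ptil D t).CompleteFor (sepIn D t) P) : pullPart D t P = classes D t := by
  refine (pullPart_good hP hR hw).part.eq_fibres _ ?_
  intro X hX Y hY a ha b hb
  obtain ⟨A, hA, hdA, rfl⟩ := mem_pullPart.1 hX
  obtain ⟨B, hB, hdB, rfl⟩ := mem_pullPart.1 hY
  obtain ⟨x, hx, -⟩ := mem_pull.1 ha
  obtain ⟨y, hy, -⟩ := mem_pull.1 hb
  constructor
  · intro hk
    by_contra hne
    refine hc A hA B hB (fun h => hne (h ▸ rfl)) hdA hdB ?_
    intro σ hσ
    rcases σ with ⟨s, hsB⟩ | m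
    · have hs : s ∈ sep D t := mem_sepIn_inl.1 hσ
      have hks : G.Adj a s ↔ G.Adj b s := by
        simpa [hs] using Finset.ext_iff.1 hk s
      obtain ⟨h1, h2⟩ := pull_hom hR hA hdA hs
      obtain ⟨h3, h4⟩ := pull_hom hR hB hdB hs
      constructor
      · rintro ⟨x', hx', hb'⟩
        exact ⟨y, hy, h3 b hb (hks.1 (h2 x' hx' hb' a ha)) y hy⟩
      · rintro ⟨y', hy', hb'⟩
        exact ⟨x, hx, h1 a ha (hks.2 (h4 y' hy' hb' b hb)) x hx⟩
    · exact (not_mem_sepIn_inr hσ).elim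
  · intro hXY
    ext s
    simp only [Finset.mem_filter, and_congr_right_iff]
    intro hs
    have hom := (pullPart_good hP hR hw).hom _ hX
    exact ⟨hom a ha b (hXY ▸ hb) s hs, hom b (hXY ▸ hb) a ha s hs⟩

/-- The discrete partition of the augmented part corresponds to the stage where the subtrees of
all children have been contracted. -/
theorem pullPart_discrete_subset :
    pullPart D t (discretePart (PtilV D t)) ⊆
      (Finset.univ.filter fun c => D.par c = t ∧ c ≠ t).biUnion (classes D) ∪
        singles (D.B t \ sep D t) := by
  intro X hX
  obtain ⟨A, hA, hd, rfl⟩ := mem_pullPart.1 hX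
  simp only [discretePart, Finset.mem_image] at hA
  obtain ⟨x, -, rfl⟩ := hA
  rw [Finset.disjoint_singleton_left] at hd
  rw [Finset.mem_union]
  rcases x with ⟨u, hu⟩ | ⟨⟨c, hc⟩, ⟨M, hM⟩⟩
  · right
    rw [mem_sepIn_inl] at hd
    refine Finset.mem_image.2 ⟨u, Finset.mem_sdiff.2 ⟨hu, hd⟩, ?_⟩
    ext v
    simp [mem_pull, Represents]
  · left
    refine Finset.mem_biUnion.2 ⟨c, by simpa using hc, ?_⟩
    have hM' := hM
    simp only [nbhds, Finset.mem_image] at hM'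
    obtain ⟨v, hv, rfl⟩ := hM'
    refine Finset.mem_image.2 ⟨v, hv, ?_⟩
    ext u
    simp [mem_pull, Represents]

/-! ### Induction on the tree -/

theorem node_chain_step {w : ℕ} (hparts : (Ptil D t).twwR (sepIn D t) ≤ w)
    (ih : ∀ c, D.par c = t ∧ c ≠ t →
      Relation.ReflTransGen (GStep G w (sep D c) (own D c)) (singles (own D c)) (classes D c)) :
    Relation.ReflTransGen (GStep G w (sep D t) (own D t)) (singles (own D t)) (classes D t) := by
  set s : Finset ι := Finset.univ.filter fun c => D.par c = t ∧ c ≠ t with hs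
  have hsc : ∀ c ∈ s, D.par c = t ∧ c ≠ t := fun c hc => (Finset.mem_filter.1 hc).2
  have h1 := children_chain D w t ih s hsc
  have hdis : Disjoint (s.biUnion (own D)) (D.B t \ sep D t) := by
    rw [Finset.disjoint_left]
    intro v hv hvt
    obtain ⟨c, hc, hvc⟩ := Finset.mem_biUnion.1 hv
    exact not_mem_bag_of_mem_own D (hsc c hc) hvc (Finset.mem_sdiff.1 hvt).1
  have h2 := chain_union (good_singles G w _ _) h1
    (good_singles G w (D.B t) (D.B t \ sep D t)) hdis
    fun u _ u' hu' _ => ⟨(Finset.mem_sdiff.1 hu').1, Finset.mem_image_of_mem _ hu'⟩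
  have h3 := chain_mono h2 (S' := sep D t) fun _ _ v hv _ => sep_subset D t hv
  have hsing : singles (s.biUnion (own D)) ∪ singles (D.B t \ sep D t) = singles (own D t) := by
    rw [own_eq D t, singles, singles, singles, Finset.image_union]
  rw [hsing, ← own_eq D t] at h3
  refine h3.trans ?_
  have hred : ∀ a ∈ sepIn D t, ∀ b, ¬ (Ptil D t).red a b := by
    intro a ha b hr
    rcases a with a | a
    · exact hr.elim
    · exact not_mem_sepIn_inr ha
  obtain ⟨len, f, ⟨hf0, hf⟩, hfR, hfc, hfw⟩ := exists_of_twwR_le _ _ w hred hparts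
  have hpart : ∀ i ≤ len, IsPart Finset.univ (f i) := by
    intro i
    induction i with
    | zero => intro _; rw [hf0]; exact isPart_discretePart _
    | succ i ih => intro hi; exact (ih (by omega)).merge (hf i (by omega))
  have hgood : ∀ i ≤ len, Good G w (sep D t) (own D t) (pullPart D t (f i)) := fun i hi =>
    pullPart_good (hpart i hi) (hfR i hi) (hfw i hi)
  have h0 : pullPart D t (f 0) = s.biUnion (classes D) ∪ singles (D.B t \ sep D t) := by
    refine (hgood 0 (by omega)).part.eq_of_subset
      (chain_good (good_singles G w _ _) h3).part ?_
    rw [hf0]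
    exact pullPart_discrete_subset
  rw [← h0, ← pullPart_complete (hpart len le_rfl) (hfR len le_rfl) (hfw len le_rfl) hfc]
  exact chain_of_fun (fun i => pullPart D t (f i)) len fun i hi =>
    ⟨pullPart_merge (hpart i (by omega)) (hfR (i + 1) (by omega)) (hf i hi), hgood (i + 1) (by omega)⟩

theorem node_chain {w : ℕ} (hparts : ∀ t, (Ptil D t).twwR (sepIn D t) ≤ w) (t : ι) :
    Relation.ReflTransGen (GStep G w (sep D t) (own D t)) (singles (own D t)) (classes D t) := by
  induction h : (Finset.univ.filter fun s => descOf D t s).card using Nat.strong_induction_on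
    generalizing t with
  | _ n ih =>
    refine node_chain_step (hparts t) fun c hc => ih _ ?_ c rfl
    rw [← h]
    refine Finset.card_lt_card ⟨?_, fun hsub => ?_⟩
    · intro s hs
      simp only [Finset.mem_filter, Finset.mem_univ, true_and] at hs ⊢
      exact descOf_trans D ⟨1, hc.1⟩ hs
    · have ht : t ∈ Finset.univ.filter fun s => descOf D t s := by
        simpa using ⟨0, rfl⟩
      have := hsub ht
      simp only [Finset.mem_filter, Finset.mem_univ, true_and] at this
      exact not_descOf_child D hc.1 hc.2 this

end Parts

/-- if a rooted tree decomposition of `G` has adhesion `k`, nodes with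
equal parent separators are siblings, and every augmented part `P̃_t` admits a complete
contraction sequence respecting its parent separator of width at most `w`,
then `tww(G) ≤ w`. -/
theorem tww_le_of_parts {V ι : Type*} [Fintype V] [Fintype ι] (G : SimpleGraph V)
    (D : RootedTreeDecomp G ι) (k w : ℕ)
    (hadh : ∀ t, (sep D t).card ≤ k)
    (hsib : ∀ s t, s ≠ D.root → t ≠ D.root → sep D s = sep D t → D.par s = D.par t)
    (hparts : ∀ t, (Ptil D t).twwR (sepIn D t) ≤ w) :
    (G.toTrigraph).tww ≤ w := by
  rcases isEmpty_or_nonempty V with hV | hV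
  · -- For empty `V` no sequence ends in `{univ}`, and the infimum of the empty set is `0`.
    have hempty : { w | ∃ f : ℕ → Finset (Finset V),
        IsCSeq V (Fintype.card V - 1) f ∧ f (Fintype.card V - 1) = {Finset.univ} ∧
        ∀ i ≤ Fintype.card V - 1, G.toTrigraph.maxRedDeg (f i) ≤ w } = ∅ := by
      rw [Set.eq_empty_iff_forall_notMem]
      rintro w' ⟨f, ⟨h0, -⟩, h1, -⟩
      simp [h0, discretePart] at h1
    rw [Trigraph.tww, hempty, Nat.sInf_empty]
    exact Nat.zero_le w
  have h := node_chain hparts D.root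
  rw [own_root, classes_root] at h
  obtain ⟨n, f, h0, hn, hs⟩ := chain_to_fun h
  have hgood : ∀ i ≤ n, Good G w (sep D D.root) Finset.univ (f i) := by
    intro i hi
    cases i with
    | zero => rw [h0]; exact good_singles G w _ _
    | succ i => exact (hs i (by omega)).2
  have hcard : ∀ i ≤ n, (f i).card + i = Fintype.card V := by
    intro i
    induction i with
    | zero =>
      intro _
      rw [h0, singles, Finset.card_image_of_injective _ Finset.singleton_injective]
      rfl
    | succ i ih =>
      intro hi
      have h1 := (hgood i (by omega)).part.card_merge (hs i (by omega)).1
      have h2 := ih (by omega)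
      omega
  have hlen : Fintype.card V - 1 = n := by
    have := hcard n le_rfl
    rw [hn, Finset.card_singleton] at this
    omega
  refine Nat.sInf_le ⟨f, ?_, ?_, ?_⟩
  · exact ⟨h0, fun i hi => (hs i (by omega)).1⟩
  · rw [hlen, hn]
  · intro i hi
    exact Finset.sup_le fun A hA => (hgood i (by omega)).deg A hA

end
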